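/- Let T ⊂ ℝ³ be a triangle with Euclidean diameter h, and let g be a C² Riemannian metric on a neighborhood of T. Define the discrete area Â(T) = (1/2)√(det γ_{αβ}(1/3,1/3)), where γ is the pullback of g under the affine parametrization of T over the standard triangle, and let A(T) = ∫_{T_S} √(det γ_{αβ}) dx be the true area. Then there is a constant c₀ depending only on bounds for g and its first two derivatives on T such that |A(T) − Â(T)| ≤ c₀ h² A(T). -/

import Mathlib

open Matrix

/-- The standard triangle with vertices `(0, 0)`, `(1, 0)`, `(0, 1)`. -/
def stdTriangle : Set (ℝ × ℝ) := {x : ℝ × ℝ | 0 ≤ x.1 ∧ 0 ≤ x.2 ∧ x.1 + x.2 ≤ 1}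

theorem centroid_mem_stdTriangle : ((1 / 3, 1 / 3) : ℝ × ℝ) ∈ stdTriangle := by
  simp only [stdTriangle, Set.mem_ofPred_eq]; norm_num

theorem isClosed_stdTriangle : IsClosed stdTriangle :=
  (isClosed_le continuous_const continuous_fst).inter
    ((isClosed_le continuous_const continuous_snd).inter
      (isClosed_le (continuous_fst.add continuous_snd) continuous_const))

theorem isCompact_stdTriangle : IsCompact stdTriangle := by
  refine (isCompact_Icc (a := ((0, 0) : ℝ × ℝ)) (b := (1, 1))).of_isClosed_subset
    isClosed_stdTriangle ?_
  rintro ⟨a, b⟩ ⟨h1, h2, h3⟩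
  simp only at h1 h2 h3
  exact ⟨⟨h1, h2⟩, ⟨by simp only; linarith, by simp only; linarith⟩⟩

theorem integral_affine_stdTriangle (α β δ : ℝ) :
    ∫ x in stdTriangle, (α + β * x.1 + δ * x.2) = α / 2 + β / 6 + δ / 6 := by
  have hmeas := isClosed_stdTriangle.measurableSet
  have hint : MeasureTheory.IntegrableOn (fun x : ℝ × ℝ => α + β * x.1 + δ * x.2) stdTriangle :=
    ContinuousOn.integrableOn_compact isCompact_stdTriangle (by fun_prop)
  rw [← MeasureTheory.integral_indicator hmeas, MeasureTheory.Measure.volume_eq_prod,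
    MeasureTheory.integral_prod]
  swap
  · rw [← MeasureTheory.Measure.volume_eq_prod]
    exact hint.integrable_indicator hmeas
  have key : ∀ s : ℝ, (∫ t, stdTriangle.indicator
      (fun x : ℝ × ℝ => α + β * x.1 + δ * x.2) (s, t)) =
      (Set.Icc (0 : ℝ) 1).indicator
        (fun s => (α + β * s) * (1 - s) + δ * ((1 - s) ^ 2 / 2)) s := by
    intro s
    by_cases hs : s ∈ Set.Icc (0 : ℝ) 1
    · have : (fun t => stdTriangle.indicator
          (fun x : ℝ × ℝ => α + β * x.1 + δ * x.2) (s, t)) =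
          (Set.Icc (0 : ℝ) (1 - s)).indicator (fun t => (α + β * s) + δ * t) := by
        ext t
        have : (s, t) ∈ stdTriangle ↔ t ∈ Set.Icc (0 : ℝ) (1 - s) :=
          ⟨fun ⟨_, h2, h3⟩ => ⟨h2, by simp only at h3; linarith⟩,
            fun ⟨h2, h3⟩ => ⟨hs.1, h2, by simp only; linarith⟩⟩
        by_cases ht : t ∈ Set.Icc (0 : ℝ) (1 - s)
        · rw [Set.indicator_of_mem ht, Set.indicator_of_mem (this.2 ht)]
        · rw [Set.indicator_of_notMem ht, Set.indicator_of_notMem (mt this.1 ht)]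
      rw [this, MeasureTheory.integral_indicator measurableSet_Icc,
        MeasureTheory.integral_Icc_eq_integral_Ioc,
        ← intervalIntegral.integral_of_le (by linarith [hs.2]), Set.indicator_of_mem hs,
        intervalIntegral.integral_add (by simp) (Continuous.intervalIntegrable (by fun_prop) _ _),
        intervalIntegral.integral_const_mul, integral_id]
      simp only [intervalIntegral.integral_const, smul_eq_mul]
      ring
    · rw [Set.indicator_of_notMem hs]
      have : ∀ t, (s, t) ∉ stdTriangle := by
        rintro t ⟨h1, h2, h3⟩
        simp only at h1 h2 h3
        exact hs ⟨h1, by linarith⟩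
      simp [Set.indicator_of_notMem (this _)]
  simp_rw [key]
  rw [MeasureTheory.integral_indicator measurableSet_Icc,
    MeasureTheory.integral_Icc_eq_integral_Ioc,
    ← intervalIntegral.integral_of_le zero_le_one]
  have hpoly : (fun s : ℝ => (α + β * s) * (1 - s) + δ * ((1 - s) ^ 2 / 2)) =
      fun s => (α + δ / 2) + (β - α - δ) * s + (δ / 2 - β) * s ^ 2 := by
    ext s; ring
  rw [hpoly, intervalIntegral.integral_add (Continuous.intervalIntegrable (by fun_prop) _ _)
      (Continuous.intervalIntegrable (by fun_prop) _ _),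
    intervalIntegral.integral_add (Continuous.intervalIntegrable (by fun_prop) _ _)
      (Continuous.intervalIntegrable (by fun_prop) _ _),
    intervalIntegral.integral_const_mul, intervalIntegral.integral_const_mul, integral_id,
    integral_pow]
  simp only [intervalIntegral.integral_const, smul_eq_mul]
  norm_num
  ring

theorem volume_real_stdTriangle : MeasureTheory.volume.real stdTriangle = 1 / 2 := by
  have := integral_affine_stdTriangle 1 0 0
  simpa using this

/-- `φ` is bounded by `B` on the standard triangle, its oscillation about the centroid is at most
`B * h`, and it is affine up to an error `B * h ^ 2`. -/
structure CentroidApprox (φ : ℝ × ℝ → ℝ) (B h : ℝ) : Prop where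
  bound : ∀ x ∈ stdTriangle, |φ x| ≤ B
  abs_sub_le : ∀ x ∈ stdTriangle, |φ x - φ (1 / 3, 1 / 3)| ≤ B * h
  exists_affine : ∃ a b : ℝ, ∀ x ∈ stdTriangle,
    |φ x - φ (1 / 3, 1 / 3) - (a * (x.1 - 1 / 3) + b * (x.2 - 1 / 3))| ≤ B * h ^ 2

namespace CentroidApprox

variable {φ ψ : ℝ × ℝ → ℝ} {B B' h : ℝ}

theorem nonneg (hφ : CentroidApprox φ B h) : 0 ≤ B :=
  (abs_nonneg _).trans (hφ.bound _ centroid_mem_stdTriangle)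

theorem mono (hφ : CentroidApprox φ B h) (hh : 0 ≤ h) (hB : B ≤ B') :
    CentroidApprox φ B' h where
  bound x hx := (hφ.bound x hx).trans hB
  abs_sub_le x hx := (hφ.abs_sub_le x hx).trans (by gcongr)
  exists_affine := by
    obtain ⟨a, b, hab⟩ := hφ.exists_affine
    exact ⟨a, b, fun x hx => (hab x hx).trans (by gcongr)⟩

theorem add (hφ : CentroidApprox φ B h) (hψ : CentroidApprox ψ B' h) :
    CentroidApprox (fun x => φ x + ψ x) (B + B') h where
  bound x hx := (abs_add_le _ _).trans (add_le_add (hφ.bound x hx) (hψ.bound x hx))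
  abs_sub_le x hx := by
    have h1 := abs_le.1 (hφ.abs_sub_le x hx)
    have h2 := abs_le.1 (hψ.abs_sub_le x hx)
    rw [abs_le]; constructor <;> linarith [h1.1, h1.2, h2.1, h2.2]
  exists_affine := by
    obtain ⟨a, b, hab⟩ := hφ.exists_affine
    obtain ⟨a', b', hab'⟩ := hψ.exists_affine
    refine ⟨a + a', b + b', fun x hx => ?_⟩
    have h1 := abs_le.1 (hab x hx)
    have h2 := abs_le.1 (hab' x hx)
    rw [abs_le]; constructor <;> linarith [h1.1, h1.2, h2.1, h2.2]

theorem const_mul (hφ : CentroidApprox φ B h) (c : ℝ) :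
    CentroidApprox (fun x => c * φ x) (|c| * B) h where
  bound x hx := by
    rw [abs_mul]; exact mul_le_mul_of_nonneg_left (hφ.bound x hx) (abs_nonneg c)
  abs_sub_le x hx := by
    rw [← mul_sub, abs_mul, mul_assoc]
    exact mul_le_mul_of_nonneg_left (hφ.abs_sub_le x hx) (abs_nonneg c)
  exists_affine := by
    obtain ⟨a, b, hab⟩ := hφ.exists_affine
    refine ⟨c * a, c * b, fun x hx => ?_⟩
    have : c * φ x - c * φ (1 / 3, 1 / 3) - (c * a * (x.1 - 1 / 3) + c * b * (x.2 - 1 / 3)) =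
      c * (φ x - φ (1 / 3, 1 / 3) - (a * (x.1 - 1 / 3) + b * (x.2 - 1 / 3))) := by ring
    rw [this, abs_mul, mul_assoc]
    exact mul_le_mul_of_nonneg_left (hab x hx) (abs_nonneg c)

theorem sub (hφ : CentroidApprox φ B h) (hψ : CentroidApprox ψ B' h) :
    CentroidApprox (fun x => φ x - ψ x) (B + B') h := by
  simpa [sub_eq_add_neg] using hφ.add (hψ.const_mul (-1))

theorem mul (hh : 0 ≤ h) (hφ : CentroidApprox φ B h) (hψ : CentroidApprox ψ B' h) :
    CentroidApprox (fun x => φ x * ψ x) (3 * (B * B')) h := by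
  have hB := hφ.nonneg
  have hB' := hψ.nonneg
  have hBB : 0 ≤ B * B' := mul_nonneg hB hB'
  have hc := hφ.bound _ centroid_mem_stdTriangle
  have hc' := hψ.bound _ centroid_mem_stdTriangle
  set p := φ (1 / 3, 1 / 3) with hp
  set q := ψ (1 / 3, 1 / 3) with hq
  refine ⟨fun x hx => ?_, fun x hx => ?_, ?_⟩
  · rw [abs_mul]
    have := mul_le_mul (hφ.bound x hx) (hψ.bound x hx) (abs_nonneg _) hB
    linarith
  · have e : φ x * ψ x - p * q = (φ x - p) * ψ x + p * (ψ x - q) := by ring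
    have h1 : |(φ x - p) * ψ x| ≤ B * h * B' := by
      rw [abs_mul]
      exact mul_le_mul (hφ.abs_sub_le x hx) (hψ.bound x hx) (abs_nonneg _) (by positivity)
    have h2 : |p * (ψ x - q)| ≤ B * (B' * h) := by
      rw [abs_mul]
      exact mul_le_mul hc (hψ.abs_sub_le x hx) (abs_nonneg _) hB
    have h3 : 0 ≤ B * B' * h := by positivity
    calc |φ x * ψ x - p * q| ≤ |(φ x - p) * ψ x| + |p * (ψ x - q)| := e ▸ abs_add_le _ _
      _ ≤ 3 * (B * B') * h := by linarith
  · obtain ⟨a, b, hab⟩ := hφ.exists_affine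
    obtain ⟨a', b', hab'⟩ := hψ.exists_affine
    refine ⟨a * q + p * a', b * q + p * b', fun x hx => ?_⟩
    have hr := hab x hx
    have hr' := hab' x hx
    rw [← hp] at hr
    rw [← hq] at hr'
    set r := φ x - p - (a * (x.1 - 1 / 3) + b * (x.2 - 1 / 3)) with hr_def
    set r' := ψ x - q - (a' * (x.1 - 1 / 3) + b' * (x.2 - 1 / 3)) with hr'_def
    have e : φ x * ψ x - p * q - ((a * q + p * a') * (x.1 - 1 / 3)
        + (b * q + p * b') * (x.2 - 1 / 3)) =
        (φ x - p) * (ψ x - q) + r * q + p * r' := by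
      rw [hr_def, hr'_def]; ring
    have h1 : |(φ x - p) * (ψ x - q)| ≤ (B * h) * (B' * h) := by
      rw [abs_mul]
      exact mul_le_mul (hφ.abs_sub_le x hx) (hψ.abs_sub_le x hx) (abs_nonneg _) (by positivity)
    have h2 : |r * q| ≤ B * h ^ 2 * B' := by
      rw [abs_mul]
      exact mul_le_mul hr hc' (abs_nonneg _) (by positivity)
    have h3 : |p * r'| ≤ B * (B' * h ^ 2) := by
      rw [abs_mul]
      exact mul_le_mul hc hr' (abs_nonneg _) hB
    calc _ ≤ |(φ x - p) * (ψ x - q)| + |r * q| + |p * r'| := by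
          rw [e]; exact abs_add_three _ _ _
      _ ≤ (B * h) * (B' * h) + B * h ^ 2 * B' + B * (B' * h ^ 2) := by gcongr
      _ = 3 * (B * B') * h ^ 2 := by ring

theorem sum {ι : Type*} (s : Finset ι) {f : ι → ℝ × ℝ → ℝ} {b : ι → ℝ}
    (hf : ∀ i ∈ s, CentroidApprox (f i) (b i) h) :
    CentroidApprox (fun x => ∑ i ∈ s, f i x) (∑ i ∈ s, b i) h := by
  classical
  induction s using Finset.induction_on with
  | empty => exact ⟨by simp, by simp, 0, 0, by simp⟩
  | insert i s hi ih =>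
    simp only [Finset.sum_insert hi]
    exact (hf i (by simp)).add (ih fun j hj => hf j (by simp [hj]))

end CentroidApprox

/-- A second-order expansion of the square root, with an error controlled by the size of the
increment and of its nonlinear part. -/
theorem abs_sqrt_sub_sqrt_sub_le {p q l N K M h : ℝ} (hN : 0 < N) (hK : 0 < K) (hM : 0 ≤ M)
    (hq : 0 ≤ q) (hp : (N / K) ^ 2 ≤ p) (hqp : |q - p| ≤ N ^ 2 * M * h)
    (hl : |q - p - l| ≤ N ^ 2 * M * h ^ 2) :
    |√q - √p - l / (2 * √p)| ≤ N * h ^ 2 * (M * K + M ^ 2 * K ^ 3) := by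
  have hm : N / K ≤ √p := Real.le_sqrt_of_sq_le hp
  have hNK : 0 < N / K := by positivity
  have hp0 : 0 ≤ p := (sq_nonneg _).trans hp
  have hsp : √p ^ 2 = p := Real.sq_sqrt hp0
  have hsq : √q ^ 2 = q := Real.sq_sqrt hq
  have hr0 : 0 ≤ √q := Real.sqrt_nonneg q
  set m := √p with hm_def
  set r := √q with hr_def
  have hm0 : 0 < m := hNK.trans_le hm
  have e : r - m - l / (2 * m) = ((q - p - l) - (r - m) ^ 2) / (2 * m) := by
    rw [← hsp, ← hsq]; field_simp; ring
  have hinv : 1 / m ≤ K / N := by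
    rw [div_le_div_iff₀ hm0 hN]; rw [div_le_iff₀ hK] at hm; linarith
  have hrm : |r - m| ≤ N * M * K * h := by
    have e1 : |r - m| * (r + m) = |q - p| := by
      rw [← hsp, ← hsq, sq_sub_sq, abs_mul, abs_of_pos (by linarith : 0 < r + m), mul_comm]
    have h1 : |r - m| * (N / K) ≤ N ^ 2 * M * h := by
      refine le_trans ?_ hqp
      rw [← e1]
      exact mul_le_mul_of_nonneg_left (by linarith) (abs_nonneg _)
    rw [← le_div_iff₀ hNK] at h1
    refine h1.trans_eq ?_
    field_simp
  have hrm2 : (r - m) ^ 2 ≤ (N * M * K * h) ^ 2 := by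
    rw [← sq_abs (r - m)]; gcongr
  rw [e, abs_div, abs_of_pos (by positivity : 0 < 2 * m)]
  have hnum : |(q - p - l) - (r - m) ^ 2| ≤ N ^ 2 * M * h ^ 2 + (N * M * K * h) ^ 2 := by
    refine (abs_sub _ _).trans ?_
    rw [abs_of_nonneg (sq_nonneg (r - m))]
    exact add_le_add hl hrm2
  calc _ ≤ (N ^ 2 * M * h ^ 2 + (N * M * K * h) ^ 2) / (2 * m) := by gcongr
    _ ≤ (N ^ 2 * M * h ^ 2 + (N * M * K * h) ^ 2) / m := by
        gcongr; linarith
    _ = (N ^ 2 * M * h ^ 2 + (N * M * K * h) ^ 2) * (1 / m) := by ring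
    _ ≤ (N ^ 2 * M * h ^ 2 + (N * M * K * h) ^ 2) * (K / N) := by gcongr
    _ = N * h ^ 2 * (M * K + M ^ 2 * K ^ 3) := by field_simp

/-- The `2 × 2` minors of a `3 × 3` matrix, indexed cyclically. -/
def cyclicMinor (G : Matrix (Fin 3) (Fin 3) ℝ) (i j : Fin 3) : ℝ :=
  G (i + 1) (j + 1) * G (i + 2) (j + 2) - G (i + 1) (j + 2) * G (i + 2) (j + 1)

/-- Cauchy–Binet for the pullback of a bilinear form on `ℝ³` to the span of two vectors. -/
theorem pullback_det_eq_sum_cyclicMinor (G : Matrix (Fin 3) (Fin 3) ℝ) (u v : Fin 3 → ℝ) :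
    (u ⬝ᵥ G *ᵥ u) * (v ⬝ᵥ G *ᵥ v) - (u ⬝ᵥ G *ᵥ v) * (v ⬝ᵥ G *ᵥ u) =
      ∑ i, ∑ j, (u ⨯₃ v) i * (u ⨯₃ v) j * cyclicMinor G i j := by
  have h1 : (1 : Fin 3) + 1 = 2 := rfl
  have h2 : (1 : Fin 3) + 2 = 0 := rfl
  have h3 : (2 : Fin 3) + 1 = 0 := rfl
  have h4 : (2 : Fin 3) + 2 = 1 := rfl
  simp [cyclicMinor, cross_apply, dotProduct, mulVec, Fin.sum_univ_three, h1, h2, h3, h4]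
  ring

/-- An elliptic (not necessarily symmetric) form has pullback determinant bounded below by the
Gram determinant. -/
theorem sq_mul_sum_cross_sq_le_pullback_det {G : Matrix (Fin 3) (Fin 3) ℝ} {k : ℝ} (hk : 0 < k)
    (hG : ∀ v : Fin 3 → ℝ, k * (∑ i, v i ^ 2) ≤ v ⬝ᵥ G *ᵥ v) (u v : Fin 3 → ℝ) :
    k ^ 2 * ∑ i, (u ⨯₃ v) i ^ 2 ≤
      (u ⬝ᵥ G *ᵥ u) * (v ⬝ᵥ G *ᵥ v) - (u ⬝ᵥ G *ᵥ v) * (v ⬝ᵥ G *ᵥ u) := by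
  by_cases hu : u = 0
  · subst hu; simp
  have hU : 0 < ∑ i, u i ^ 2 := by
    obtain ⟨i, hi⟩ := Function.ne_iff.1 hu
    exact Finset.sum_pos' (fun i _ => sq_nonneg _) ⟨i, Finset.mem_univ i, by
      have : u i ≠ 0 := hi
      positivity⟩
  have ha := hG u
  set a := u ⬝ᵥ G *ᵥ u with ha_def
  set b := u ⬝ᵥ G *ᵥ v with hb_def
  set c := v ⬝ᵥ G *ᵥ u with hc_def
  set d := v ⬝ᵥ G *ᵥ v with hd_def
  set U := ∑ i, u i ^ 2 with hU_def
  set W := ∑ i, (u ⨯₃ v) i ^ 2 with hW_def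
  have hW0 : 0 ≤ W := Finset.sum_nonneg fun i _ => sq_nonneg _
  have ha0 : 0 < a := (mul_pos hk hU).trans_le ha
  have hw := hG ((2 * a) • v - (b + c) • u)
  have e1 : ((2 * a) • v - (b + c) • u) ⬝ᵥ G *ᵥ ((2 * a) • v - (b + c) • u) =
      a * (4 * (a * d) - (b + c) ^ 2) := by
    simp only [mulVec_sub, mulVec_smul, dotProduct_sub, sub_dotProduct, dotProduct_smul,
      smul_dotProduct, smul_eq_mul, ← ha_def, ← hb_def, ← hc_def, ← hd_def]
    ring
  have e2 : 4 * a ^ 2 * W ≤ U * ∑ i, ((2 * a) • v - (b + c) • u) i ^ 2 := by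
    have : U * ∑ i, ((2 * a) • v - (b + c) • u) i ^ 2 - 4 * a ^ 2 * W =
        (∑ i, u i * ((2 * a) • v - (b + c) • u) i) ^ 2 := by
      simp [hU_def, hW_def, cross_apply, Fin.sum_univ_three]
      ring
    nlinarith [sq_nonneg (∑ i, u i * ((2 * a) • v - (b + c) • u) i)]
  rw [e1] at hw
  have h1 : a * (k * (4 * a * W)) ≤ a * (U * (4 * (a * d) - (b + c) ^ 2)) := by
    have := mul_le_mul_of_nonneg_left e2 hk.le
    have := mul_le_mul_of_nonneg_left hw hU.le
    nlinarith
  have h2 := le_of_mul_le_mul_left h1 ha0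
  have h3 : U * (k ^ 2 * (4 * W)) ≤ U * (4 * (a * d) - (b + c) ^ 2) := by
    refine le_trans ?_ h2
    have := mul_le_mul_of_nonneg_right ha (by positivity : 0 ≤ k * (4 * W))
    nlinarith
  have h4 := le_of_mul_le_mul_left h3 hU
  nlinarith [sq_nonneg (b - c)]

/-- A second-order Taylor estimate on a convex set. -/
theorem norm_sub_sub_fderiv_le {E : Type*} [NormedAddCommGroup E] [NormedSpace ℝ E]
    {f : E → ℝ} (hf : ContDiff ℝ 2 f) {s : Set E} (hs : Convex ℝ s) {K : ℝ}
    (hK : ∀ y ∈ s, ‖iteratedFDeriv ℝ 2 f y‖ ≤ K) (hK0 : 0 ≤ K) {D : ℝ}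
    (hD : ∀ y ∈ s, ∀ z ∈ s, ‖y - z‖ ≤ D)
    {x y : E} (hx : x ∈ s) (hy : y ∈ s) :
    ‖f y - f x - fderiv ℝ f x (y - x)‖ ≤ K * D ^ 2 := by
  have hd : Differentiable ℝ f := hf.differentiable (by norm_num)
  have hd' : Differentiable ℝ (fderiv ℝ f) :=
    (hf.fderiv_right (m := 1) (by norm_num)).differentiable (by norm_num)
  have h2 : ∀ z ∈ s, ‖fderiv ℝ (fderiv ℝ f) z‖ ≤ K := fun z hz => by
    rw [← norm_iteratedFDeriv_one, norm_iteratedFDeriv_fderiv]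
    exact hK z hz
  have hDx := hD y hy x hx
  have hDn : 0 ≤ D := (norm_nonneg _).trans hDx
  have h3 : ∀ z ∈ s, ‖fderiv ℝ f z - fderiv ℝ f x‖ ≤ K * D := fun z hz =>
    (hs.norm_image_sub_le_of_norm_fderiv_le (fun w _ => hd' w) h2 hx hz).trans
      (by gcongr; exact hD z hz x hx)
  calc _ ≤ K * D * ‖y - x‖ :=
        hs.norm_image_sub_le_of_norm_fderiv_le' (fun w _ => hd w) h3 hx hy
    _ ≤ K * D * D := by gcongr
    _ = K * D ^ 2 := by ring

theorem affine_mem_convexHull {p₀ p₁ p₂ : Fin 3 → ℝ} {x : ℝ × ℝ} (hx : x ∈ stdTriangle) :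
    (fun i => (1 - x.1 - x.2) * p₀ i + x.1 * p₁ i + x.2 * p₂ i) ∈
      convexHull ℝ {p₀, p₁, p₂} := by
  obtain ⟨h1, h2, h3⟩ := hx
  have := (convex_convexHull ℝ {p₀, p₁, p₂}).sum_mem (t := Finset.univ)
    (w := ![1 - x.1 - x.2, x.1, x.2]) (z := ![p₀, p₁, p₂])
    (by intro i _; fin_cases i <;> simp <;> linarith)
    (by simp [Fin.sum_univ_three]; ring)
    (by intro i _; apply subset_convexHull; fin_cases i <;> simp)
  convert this using 1
  ext i
  simp [Fin.sum_univ_three]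

theorem CentroidApprox.comp_affine {f : (Fin 3 → ℝ) → ℝ} (hf : ContDiff ℝ 2 f)
    {p₀ p₁ p₂ : Fin 3 → ℝ} {K : ℝ} (hK : 0 ≤ K)
    (hb : ∀ y ∈ convexHull ℝ {p₀, p₁, p₂}, |f y| ≤ K ∧ ‖fderiv ℝ f y‖ ≤ K ∧
      ‖iteratedFDeriv ℝ 2 f y‖ ≤ K) :
    CentroidApprox
      (fun x => f (fun i => (1 - x.1 - x.2) * p₀ i + x.1 * p₁ i + x.2 * p₂ i)) K
      (Metric.diam (convexHull ℝ {p₀, p₁, p₂})) := by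
  have hbdd : Bornology.IsBounded (convexHull ℝ {p₀, p₁, p₂}) :=
    isBounded_convexHull.2 (Set.toFinite {p₀, p₁, p₂}).isBounded
  have hdiam : ∀ y ∈ convexHull ℝ {p₀, p₁, p₂}, ∀ z ∈ convexHull ℝ {p₀, p₁, p₂},
      ‖y - z‖ ≤ Metric.diam (convexHull ℝ {p₀, p₁, p₂}) := fun y hy z hz => by
    rw [← dist_eq_norm]; exact Metric.dist_le_diam_of_mem hbdd hy hz
  have hconv := convex_convexHull ℝ {p₀, p₁, p₂}
  have hd : Differentiable ℝ f := hf.differentiable (by norm_num)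
  have hc := affine_mem_convexHull (p₀ := p₀) (p₁ := p₁) (p₂ := p₂) centroid_mem_stdTriangle
  refine ⟨fun x hx => (hb _ (affine_mem_convexHull hx)).1, fun x hx => ?_, ?_⟩
  · have hx' := affine_mem_convexHull (p₀ := p₀) (p₁ := p₁) (p₂ := p₂) hx
    refine (hconv.norm_image_sub_le_of_norm_fderiv_le (fun w _ => hd w)
      (fun y hy => (hb y hy).2.1) hc hx').trans ?_
    exact mul_le_mul_of_nonneg_left (hdiam _ hx' _ hc) hK
  · set c : Fin 3 → ℝ := fun i => (1 - ((1 / 3, 1 / 3) : ℝ × ℝ).1 - ((1 / 3, 1 / 3) : ℝ × ℝ).2) * p₀ i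
      + ((1 / 3, 1 / 3) : ℝ × ℝ).1 * p₁ i + ((1 / 3, 1 / 3) : ℝ × ℝ).2 * p₂ i with hc_def
    refine ⟨fderiv ℝ f c (p₁ - p₀), fderiv ℝ f c (p₂ - p₀), fun x hx => ?_⟩
    have hx' := affine_mem_convexHull (p₀ := p₀) (p₁ := p₁) (p₂ := p₂) hx
    have := norm_sub_sub_fderiv_le hf hconv (fun y hy => (hb y hy).2.2) hK hdiam hc hx'
    have e : (fun i => (1 - x.1 - x.2) * p₀ i + x.1 * p₁ i + x.2 * p₂ i) - c =
        (x.1 - 1 / 3) • (p₁ - p₀) + (x.2 - 1 / 3) • (p₂ - p₀) := by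
      ext i
      simp only [hc_def, Pi.sub_apply, Pi.add_apply, Pi.smul_apply, smul_eq_mul]
      ring
    rw [e, map_add, map_smul, map_smul, Real.norm_eq_abs] at this
    simpa only [smul_eq_mul, mul_comm] using this

/-- The centroid rule for the square root of a function bounded below on the standard triangle. -/
theorem abs_integral_sqrt_sub_le {q : ℝ × ℝ → ℝ} (hq : Continuous q) {N K M h : ℝ}
    (hN : 0 < N) (hK : 0 < K) (hlow : ∀ x ∈ stdTriangle, (N / K) ^ 2 ≤ q x)
    (hM : 0 ≤ M) (happ : CentroidApprox q (N ^ 2 * M) h) :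
    |(∫ x in stdTriangle, √(q x)) - 1 / 2 * √(q (1 / 3, 1 / 3))| ≤
      K * (M * K + M ^ 2 * K ^ 3) * h ^ 2 * ∫ x in stdTriangle, √(q x) := by
  have hint : MeasureTheory.IntegrableOn (fun x => √(q x)) stdTriangle :=
    ContinuousOn.integrableOn_compact isCompact_stdTriangle (by fun_prop)
  have hfin : MeasureTheory.volume stdTriangle < ⊤ := isCompact_stdTriangle.measure_lt_top
  have hA : N / K / 2 ≤ ∫ x in stdTriangle, √(q x) := by
    have h1 : ∫ x in stdTriangle, N / K = N / K / 2 := by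
      rw [MeasureTheory.setIntegral_const, volume_real_stdTriangle, smul_eq_mul]; ring
    rw [← h1]
    exact MeasureTheory.setIntegral_mono_on
      (MeasureTheory.integrableOn_const hfin.ne) hint isClosed_stdTriangle.measurableSet
      fun x hx => Real.le_sqrt_of_sq_le (hlow x hx)
  obtain ⟨a, b, hab⟩ := happ.exists_affine
  set p := q (1 / 3, 1 / 3) with hp
  set L : ℝ × ℝ → ℝ := fun x => √p - (a + b) / 3 / (2 * √p) + a / (2 * √p) * x.1
    + b / (2 * √p) * x.2 with hL
  have hLint : MeasureTheory.IntegrableOn L stdTriangle :=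
    ContinuousOn.integrableOn_compact isCompact_stdTriangle (by fun_prop)
  have hpt : ∀ x ∈ stdTriangle, ‖√(q x) - L x‖ ≤ N * h ^ 2 * (M * K + M ^ 2 * K ^ 3) := by
    intro x hx
    have := abs_sqrt_sub_sqrt_sub_le hN hK hM ((sq_nonneg _).trans (hlow x hx))
      (hlow _ centroid_mem_stdTriangle) (happ.abs_sub_le x hx) (hab x hx)
    rw [Real.norm_eq_abs]
    convert this using 2
    simp only [hL, ← hp]
    ring
  have hnorm := MeasureTheory.norm_setIntegral_le_of_norm_le_const hfin hpt
  rw [MeasureTheory.integral_sub hint hLint, hL, integral_affine_stdTriangle,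
    volume_real_stdTriangle, Real.norm_eq_abs] at hnorm
  have e : (√p - (a + b) / 3 / (2 * √p)) / 2 + a / (2 * √p) / 6 + b / (2 * √p) / 6 =
      1 / 2 * √p := by ring
  rw [e] at hnorm
  calc _ ≤ N * h ^ 2 * (M * K + M ^ 2 * K ^ 3) * (1 / 2) := hnorm
    _ = K * (M * K + M ^ 2 * K ^ 3) * h ^ 2 * (N / K / 2) := by field_simp
    _ ≤ _ := by gcongr

theorem CentroidApprox.minor {G : ℝ × ℝ → Matrix (Fin 3) (Fin 3) ℝ} {K h : ℝ} (hh : 0 ≤ h)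
    (hG : ∀ i j, CentroidApprox (fun x => G x i j) K h) (i j : Fin 3) :
    CentroidApprox (fun x => cyclicMinor (G x) i j) (6 * K ^ 2) h := by
  have := (mul hh (hG (i + 1) (j + 1)) (hG (i + 2) (j + 2))).sub
    (mul hh (hG (i + 1) (j + 2)) (hG (i + 2) (j + 1)))
  convert this using 1
  · rfl
  · ring

theorem CentroidApprox.quadratic_cyclicMinor {G : ℝ × ℝ → Matrix (Fin 3) (Fin 3) ℝ} {K h : ℝ}
    (hh : 0 ≤ h) (hG : ∀ i j, CentroidApprox (fun x => G x i j) K h) (w : Fin 3 → ℝ) :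
    CentroidApprox (fun x => ∑ i, ∑ j, w i * w j * cyclicMinor (G x) i j)
      (√(∑ i, w i ^ 2) ^ 2 * (54 * K ^ 2)) h := by
  have hw : ∀ i, |w i| ≤ √(∑ i, w i ^ 2) := fun i => by
    rw [← Real.sqrt_sq_eq_abs]
    exact Real.sqrt_le_sqrt
      (Finset.single_le_sum (f := fun i => w i ^ 2) (fun i _ => sq_nonneg _) (Finset.mem_univ i))
  refine (CentroidApprox.sum Finset.univ fun i _ => CentroidApprox.sum Finset.univ fun j _ =>
    (CentroidApprox.minor hh hG i j).const_mul (w i * w j)).mono hh ?_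
  calc _ ≤ ∑ _i : Fin 3, ∑ _j : Fin 3, √(∑ i, w i ^ 2) ^ 2 * (6 * K ^ 2) := by
        gcongr with i _ j _
        rw [abs_mul, sq]
        exact mul_le_mul (hw i) (hw j) (abs_nonneg _) (Real.sqrt_nonneg _)
    _ = √(∑ i, w i ^ 2) ^ 2 * (54 * K ^ 2) := by
        simp only [Finset.sum_const, Finset.card_univ, Fintype.card_fin, nsmul_eq_mul]
        push_cast
        ring

/-- Centroid-rule error estimate for the discrete area: for a `C²` Riemannian
metric `g` on a neighborhood of a triangle `T = Δ(p₀,p₁,p₂) ⊂ ℝ³` of Euclidean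
diameter `h`, with `γ(x)` the pullback of `g` under the affine parametrization of
`T` over the standard triangle `T_S`, the true area `A(T) = ∫_{T_S} √(det γ) dx`
and the discrete area `Â(T) = (1/2)√(det γ(1/3,1/3))` satisfy
`|A(T) − Â(T)| ≤ c₀ h² A(T)` with `c₀` depending only on bounds `K` for `g`, its
first two derivatives, and its ellipticity on `T`. -/
theorem discrete_area_error_bound
    (g : (Fin 3 → ℝ) → Matrix (Fin 3) (Fin 3) ℝ)
    (hg : ∀ i j, ContDiff ℝ 2 (fun y => g y i j)) :
    ∀ K : ℝ, 0 < K → ∃ c₀ : ℝ, 0 < c₀ ∧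
      ∀ (p₀ p₁ p₂ : Fin 3 → ℝ) (h : ℝ)
        (hh : h = Metric.diam (convexHull ℝ {p₀, p₁, p₂}))
        (hbound : ∀ y ∈ convexHull ℝ {p₀, p₁, p₂},
          (∀ i j, |g y i j| ≤ K ∧
            ‖fderiv ℝ (fun z => g z i j) y‖ ≤ K ∧
            ‖iteratedFDeriv ℝ 2 (fun z => g z i j) y‖ ≤ K) ∧
          (∀ v : Fin 3 → ℝ, K⁻¹ * (∑ i, v i ^ 2) ≤ v ⬝ᵥ (g y).mulVec v))
        (F : ℝ × ℝ → Fin 3 → ℝ)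
        (hF : ∀ x : ℝ × ℝ, F x = fun i =>
          (1 - x.1 - x.2) * p₀ i + x.1 * p₁ i + x.2 * p₂ i)
        (γ : ℝ × ℝ → Matrix (Fin 2) (Fin 2) ℝ)
        (hγ : ∀ x α β, γ x α β =
          (fun i => (if α = 0 then p₁ else p₂) i - p₀ i) ⬝ᵥ
            (g (F x)).mulVec (fun i => (if β = 0 then p₁ else p₂) i - p₀ i))
        (A Adisc : ℝ)
        (hA : A = ∫ x in {x : ℝ × ℝ | 0 ≤ x.1 ∧ 0 ≤ x.2 ∧ x.1 + x.2 ≤ 1},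
          Real.sqrt (γ x).det)
        (hAdisc : Adisc = (1/2) * Real.sqrt (γ (1/3, 1/3)).det),
        |A - Adisc| ≤ c₀ * h ^ 2 * A := by
  intro K hK
  refine ⟨K * (54 * K ^ 2 * K + (54 * K ^ 2) ^ 2 * K ^ 3), by positivity, ?_⟩
  intro p₀ p₁ p₂ h hh hbound F hF γ hγ A Adisc hA hAdisc
  set w := (p₁ - p₀) ⨯₃ (p₂ - p₀) with hw
  have hdet : ∀ x, (γ x).det = ((p₁ - p₀) ⬝ᵥ g (F x) *ᵥ (p₁ - p₀)) *
      ((p₂ - p₀) ⬝ᵥ g (F x) *ᵥ (p₂ - p₀)) - ((p₁ - p₀) ⬝ᵥ g (F x) *ᵥ (p₂ - p₀)) *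
      ((p₂ - p₀) ⬝ᵥ g (F x) *ᵥ (p₁ - p₀)) := fun x => by
    rw [det_fin_two, hγ, hγ, hγ, hγ]
    rfl
  have hsum : ∀ x, (γ x).det = ∑ i, ∑ j, w i * w j * cyclicMinor (g (F x)) i j := fun x => by
    rw [hdet, pullback_det_eq_sum_cyclicMinor]
  have hA' : A = ∫ x in stdTriangle, √(γ x).det := hA
  have hh0 : 0 ≤ h := hh ▸ Metric.diam_nonneg
  have hG : ∀ i j, CentroidApprox (fun x => g (F x) i j) K h := fun i j => by
    simp only [hF, hh]
    exact CentroidApprox.comp_affine (hg i j) hK.le fun y hy => (hbound y hy).1 i j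
  have happ := CentroidApprox.quadratic_cyclicMinor hh0 hG w
  simp only [← hsum] at happ
  rw [hA', hAdisc]
  by_cases hw0 : w = 0
  · simp [hsum, hw0]
  have hN : 0 < √(∑ i, w i ^ 2) := by
    obtain ⟨i, hi⟩ := Function.ne_iff.1 hw0
    exact Real.sqrt_pos.2 (Finset.sum_pos' (fun i _ => sq_nonneg _) ⟨i, Finset.mem_univ i, by
      have : w i ≠ 0 := hi
      positivity⟩)
  refine abs_integral_sqrt_sub_le ?_ hN hK (fun x hx => ?_) (by positivity) happ
  · have hFc : Continuous F := by
      rw [funext hF]; fun_prop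
    have hgc : ∀ i j, Continuous fun x => g (F x) i j := fun i j =>
      (hg i j).continuous.comp hFc
    simp only [hsum, cyclicMinor]
    fun_prop
  · have hFx : F x ∈ convexHull ℝ {p₀, p₁, p₂} := by
      rw [hF]; exact affine_mem_convexHull hx
    have := sq_mul_sum_cross_sq_le_pullback_det (inv_pos.2 hK) (hbound _ hFx).2
      (p₁ - p₀) (p₂ - p₀)
    rw [← hdet, ← hw] at this
    rw [div_pow, Real.sq_sqrt (Finset.sum_nonneg fun i _ => sq_nonneg _)]
    refine le_of_eq_of_le ?_ this
    rw [inv_pow]; ring
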